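/- arXiv:2605.17972 — 2 statements merged into one kernel-verified Lean document; each statement's English description precedes it below -/
import Mathlib

section
/- Let K be a number field with ring of integers O_K, and let L be a finitely generated projective O_K-module of constant rank two. Set SL(L) := {g ∈ Aut_{O_K}(L) : det(g) = 1}, and for a non-zero ideal 𝔞 ⊆ O_K let 𝒢(𝔞) := {g ∈ SL(L) : (g − id)(L) ⊆ 𝔞L}. Then for any two non-zero ideals 𝔞, 𝔟 ⊆ O_K, the setwise product satisfies 𝒢(𝔞)·𝒢(𝔟) = 𝒢(𝔞 + 𝔟). -/
set_option synthInstance.maxHeartbeats 400000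
set_option maxHeartbeats 1000000

noncomputable section

open scoped Pointwise

namespace Paper

variable (K : Type*) [Field K] [NumberField K]
variable (L : Type*) [AddCommGroup L] [Module (NumberField.RingOfIntegers K) L]

/-- Determinant-one automorphisms of `L` congruent to the identity modulo `𝔞`,
i.e. the principal congruence subgroup `𝒢(𝔞) ⊆ SL(L)` (as a set): the determinant
of `g` is computed as the determinant of the base change of `g` to `K`. -/
def congSet (𝔞 : Ideal (NumberField.RingOfIntegers K)) :
    Set (L ≃ₗ[NumberField.RingOfIntegers K] L) :=
  {g | LinearMap.det
        (LinearMap.baseChange K (g : L →ₗ[NumberField.RingOfIntegers K] L)) = 1 ∧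
      ∀ x : L, g x - x ∈ 𝔞 • (⊤ : Submodule (NumberField.RingOfIntegers K) L)}

end Paper

open Paper

section CongruenceProduct

open nonZeroDivisors

variable {R : Type*} [CommRing R] [IsDedekindDomain R]

section Arithmetic

/-- Quotients of a Dedekind domain by non-zero ideals have stable range one. -/
theorem exists_mem_span_add_sup_eq_top {A 𝔠 : Ideal R} (hA : A ≠ ⊥) {x : R}
    (h : Ideal.span {x} ⊔ A ⊔ 𝔠 = ⊤) :
    ∃ t ∈ 𝔠, Ideal.span {x + t} ⊔ A = ⊤ := by
  classical
  have hfin : {p : Ideal R | p.IsMaximal ∧ A ≤ p}.Finite := by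
    refine ((Ideal.finite_factors hA).image fun v => v.asIdeal).subset ?_
    rintro p ⟨hp, hAp⟩
    exact ⟨⟨p, hp.isPrime, fun h0 => hA (le_bot_iff.mp (hAp.trans h0.le))⟩,
      Ideal.dvd_iff_le.mpr hAp, rfl⟩
  obtain ⟨S₀, hS₀⟩ : ∃ S₀ : Finset (Ideal R), ∀ p, p ∈ S₀ ↔ (p.IsMaximal ∧ A ≤ p) ∧ x ∈ p :=
    ⟨hfin.toFinset.filter fun p => x ∈ p, by simp⟩
  obtain ⟨S₁, hS₁⟩ : ∃ S₁ : Finset (Ideal R), ∀ p, p ∈ S₁ ↔ (p.IsMaximal ∧ A ≤ p) ∧ x ∉ p :=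
    ⟨hfin.toFinset.filter fun p => x ∉ p, by simp⟩
  have key : ¬ (((𝔠 * ∏ p ∈ S₁, p : Ideal R) : Set R) ⊆ ⋃ p ∈ (↑S₀ : Set (Ideal R)), p) := by
    rw [Ideal.subset_union_prime (f := fun p => p) ⊥ ⊥]
    · rintro ⟨p, hp, hle⟩
      rw [hS₀] at hp
      obtain ⟨⟨hpm, hAp⟩, hxp⟩ := hp
      rcases hpm.isPrime.mul_le.mp hle with h1 | h1
      · refine hpm.ne_top (top_le_iff.mp (h.ge.trans (sup_le (sup_le ?_ hAp) h1)))
        rwa [Ideal.span_singleton_le_iff_mem]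
      · obtain ⟨q, hq, hqp⟩ := (hpm.isPrime.prod_le).mp h1
        rw [hS₁] at hq
        rw [hq.1.1.eq_of_le hpm.ne_top hqp] at hq
        exact hq.2 hxp
    · intro p hp _ _
      rw [hS₀] at hp
      exact hp.1.1.isPrime
  obtain ⟨t, ht, htn⟩ := Set.not_subset.mp key
  rw [SetLike.mem_coe] at ht
  have ht𝔠 : t ∈ 𝔠 := (Ideal.mul_le_left : 𝔠 * ∏ p ∈ S₁, p ≤ 𝔠) ht
  have htS : t ∈ ∏ p ∈ S₁, p := (Ideal.mul_le_right : 𝔠 * ∏ p ∈ S₁, p ≤ ∏ p ∈ S₁, p) ht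
  refine ⟨t, ht𝔠, ?_⟩
  by_contra hne
  obtain ⟨p, hpm, hp⟩ := Ideal.exists_le_maximal _ hne
  have hAp : A ≤ p := le_sup_right.trans hp
  have hxt : x + t ∈ p := hp (Ideal.mem_sup_left (Ideal.mem_span_singleton_self _))
  by_cases hx : x ∈ p
  · refine htn (Set.mem_biUnion (x := p) ?_ ((p.add_mem_iff_right hx).mp hxt))
    simp [hS₀, hpm, hAp, hx]
  · have hp₁ : p ∈ S₁ := (hS₁ p).mpr ⟨⟨hpm, hAp⟩, hx⟩
    have htp : t ∈ p := Ideal.le_of_dvd (Finset.dvd_prod_of_mem (fun p => p) hp₁) htS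
    exact hx ((p.add_mem_iff_left htp).mp hxt)

variable {K : Type*} [Field K] [Algebra R K] [IsFractionRing R K]

/-- Multiplying an element of a fractional ideal by an element of an ideal multiple of the
inverse fractional ideal. -/
theorem FractionalIdeal.mul_mem_of_mul_eq_one {B C D : FractionalIdeal R⁰ K} (hBC : B * C = 1)
    {y z : K} (hy : y ∈ D * B) (hz : z ∈ C) : y * z ∈ D := by
  have := FractionalIdeal.mul_mem_mul hy hz
  rwa [mul_assoc, hBC, mul_one] at this

theorem FractionalIdeal.mul_mem_of_mem_one {D : FractionalIdeal R⁰ K}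
    {y z : K} (hy : y ∈ D) (hz : z ∈ (1 : FractionalIdeal R⁰ K)) : y * z ∈ D := by
  have := FractionalIdeal.mul_mem_mul hy hz
  rwa [mul_one] at this

/-- A generalized two by two matrix whose determinant is one modulo `𝔠` is congruent modulo `𝔠`
to one of determinant one. -/
theorem exists_det_eq_one_of_det_sub_one_mem {B C : FractionalIdeal R⁰ K} (hBC : B * C = 1)
    {𝔠 : Ideal R} (h𝔠 : 𝔠 ≠ ⊥) {x y z w : K}
    (hx : x ∈ (1 : FractionalIdeal R⁰ K)) (hy : y ∈ B) (hz : z ∈ C)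
    (hw : w ∈ (1 : FractionalIdeal R⁰ K))
    (hdet : x * w - y * z - 1 ∈ (𝔠 : FractionalIdeal R⁰ K)) :
    ∃ x' y' z' w' : K, x' - x ∈ (𝔠 : FractionalIdeal R⁰ K) ∧
      y' - y ∈ (𝔠 : FractionalIdeal R⁰ K) * B ∧ z' - z ∈ (𝔠 : FractionalIdeal R⁰ K) * C ∧
      w' - w ∈ (𝔠 : FractionalIdeal R⁰ K) ∧ x' * w' - y' * z' = 1 := by
  have hB : B ≠ 0 := left_ne_zero_of_mul_eq_one hBC
  have hC : C ≠ 0 := right_ne_zero_of_mul_eq_one hBC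
  have h𝔠' : (𝔠 : FractionalIdeal R⁰ K) ≠ 0 := FractionalIdeal.coeIdeal_ne_zero.mpr h𝔠
  have h𝔠1 : (𝔠 : FractionalIdeal R⁰ K) ≤ 1 := FractionalIdeal.coeIdeal_le_one
  have hle : ∀ D : FractionalIdeal R⁰ K, (𝔠 : FractionalIdeal R⁰ K) * D ≤ D := fun D =>
    (mul_le_mul_left h𝔠1 D).trans_eq (one_mul D)
  obtain ⟨y₁, hy₁0, hy₁⟩ : ∃ y₁ : K, y₁ ≠ 0 ∧ y₁ - y ∈ (𝔠 : FractionalIdeal R⁰ K) * B := by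
    by_cases h0 : y = 0
    · obtain ⟨b, hb, hb0⟩ : ∃ b ∈ (𝔠 : FractionalIdeal R⁰ K) * B, b ≠ 0 := by
        by_contra! hcon
        exact mul_ne_zero h𝔠' hB (FractionalIdeal.eq_zero_iff.mpr hcon)
      exact ⟨b, hb0, by simpa [h0] using hb⟩
    · exact ⟨y, h0, by rw [sub_self]; exact FractionalIdeal.zero_mem _⟩
  have hy₁B : y₁ ∈ B := by
    have := B.coeToSubmodule.add_mem (hle B hy₁) hy
    rwa [sub_add_cancel] at this
  have hdet₁ : x * w - y₁ * z - 1 ∈ (𝔠 : FractionalIdeal R⁰ K) := by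
    have := (𝔠 : FractionalIdeal R⁰ K).coeToSubmodule.sub_mem hdet
      (FractionalIdeal.mul_mem_of_mul_eq_one hBC hy₁ hz)
    rwa [show x * w - y * z - 1 - (y₁ - y) * z = x * w - y₁ * z - 1 by ring] at this
  obtain ⟨A, hA⟩ : ∃ A : Ideal R,
      (A : FractionalIdeal R⁰ K) = FractionalIdeal.spanSingleton R⁰ y₁ * C := by
    rw [← FractionalIdeal.le_one_iff_exists_coeIdeal, ← hBC]
    exact mul_le_mul_left (FractionalIdeal.spanSingleton_le_iff_mem.mpr hy₁B) C
  have hA0 : A ≠ ⊥ := by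
    rw [← FractionalIdeal.coeIdeal_ne_zero (K := K), hA]
    exact mul_ne_zero (FractionalIdeal.spanSingleton_ne_zero_iff.mpr hy₁0) hC
  have hAmem : ∀ a : R, a ∈ A ↔ ∃ q ∈ C, algebraMap R K a = y₁ * q := by
    intro a
    rw [← FractionalIdeal.mem_singleton_mul, ← hA, FractionalIdeal.mem_coeIdeal]
    constructor
    · exact fun h => ⟨a, h, rfl⟩
    · rintro ⟨b, hb, hab⟩
      rwa [← IsFractionRing.injective R K hab]
  obtain ⟨x₀, rfl⟩ := (FractionalIdeal.mem_one_iff _).mp hx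
  obtain ⟨w₀, rfl⟩ := (FractionalIdeal.mem_one_iff _).mp hw
  obtain ⟨e, he, hee⟩ := (FractionalIdeal.mem_coeIdeal _).mp hdet₁
  have htop : Ideal.span {x₀} ⊔ A ⊔ 𝔠 = ⊤ := by
    have ha : x₀ * w₀ - 1 - e ∈ A := (hAmem _).mpr ⟨z, hz, by
      rw [map_sub, map_sub, hee, map_mul, map_one]; ring⟩
    rw [Ideal.eq_top_iff_one]
    have : (1 : R) = x₀ * w₀ - (x₀ * w₀ - 1 - e) - e := by ring
    rw [this]
    refine Ideal.sub_mem _ (Ideal.mem_sup_left (Ideal.sub_mem _ (Ideal.mem_sup_left ?_)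
      (Ideal.mem_sup_right ha))) (Ideal.mem_sup_right he)
    exact Ideal.mul_mem_right _ _ (Ideal.mem_span_singleton_self _)
  obtain ⟨t, ht, htt⟩ := exists_mem_span_add_sup_eq_top hA0 htop
  rw [Ideal.eq_top_iff_one, Submodule.mem_sup] at htt
  obtain ⟨r', hr', a, ha, hra⟩ := htt
  obtain ⟨r, rfl⟩ := Ideal.mem_span_singleton'.mp hr'
  obtain ⟨q, hq, haq⟩ := (hAmem a).mp ha
  have he' : e + t * w₀ ∈ 𝔠 := 𝔠.add_mem he (𝔠.mul_mem_right _ ht)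
  have hmem : ∀ {c : R}, c ∈ 𝔠 → algebraMap R K c ∈ (𝔠 : FractionalIdeal R⁰ K) :=
    fun h => FractionalIdeal.mem_coeIdeal_of_mem _ h
  refine ⟨algebraMap R K (x₀ + t), y₁, z + algebraMap R K (e + t * w₀) * q,
    algebraMap R K (w₀ - (e + t * w₀) * r), ?_, hy₁, ?_, ?_, ?_⟩
  · rw [← map_sub, add_sub_cancel_left]
    exact hmem ht
  · rw [add_sub_cancel_left]
    exact FractionalIdeal.mul_mem_mul (hmem he') hq
  · rw [← map_sub, sub_sub_cancel_left]
    exact hmem (𝔠.neg_mem (𝔠.mul_mem_right _ he'))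
  · have h1 := congrArg (algebraMap R K) hra
    simp only [map_add, map_mul, map_one, haq, map_sub] at h1 hee ⊢
    linear_combination (algebraMap R K e + algebraMap R K t * algebraMap R K w₀) * (-h1) - hee

/-- Matrix form of the product formula for congruence subgroups: `1 + (x, y; z, w)` is congruent
modulo `𝔟` to a matrix of determinant one which is the identity modulo `𝔞`. -/
theorem exists_det_eq_one_congruent {B C : FractionalIdeal R⁰ K} (hBC : B * C = 1)
    {𝔞 𝔟 : Ideal R} (ha : 𝔞 ≠ ⊥) (hb : 𝔟 ≠ ⊥) {x y z w : K}
    (hx : x ∈ ((𝔞 + 𝔟 : Ideal R) : FractionalIdeal R⁰ K))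
    (hy : y ∈ ((𝔞 + 𝔟 : Ideal R) : FractionalIdeal R⁰ K) * B)
    (hz : z ∈ ((𝔞 + 𝔟 : Ideal R) : FractionalIdeal R⁰ K) * C)
    (hw : w ∈ ((𝔞 + 𝔟 : Ideal R) : FractionalIdeal R⁰ K))
    (hdet : (1 + x) * (1 + w) - y * z = 1) :
    ∃ x' y' z' w' : K,
      (x' ∈ (𝔞 : FractionalIdeal R⁰ K) ∧ y' ∈ (𝔞 : FractionalIdeal R⁰ K) * B ∧
        z' ∈ (𝔞 : FractionalIdeal R⁰ K) * C ∧ w' ∈ (𝔞 : FractionalIdeal R⁰ K)) ∧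
      (x - x' ∈ (𝔟 : FractionalIdeal R⁰ K) ∧ y - y' ∈ (𝔟 : FractionalIdeal R⁰ K) * B ∧
        z - z' ∈ (𝔟 : FractionalIdeal R⁰ K) * C ∧ w - w' ∈ (𝔟 : FractionalIdeal R⁰ K)) ∧
      (1 + x') * (1 + w') - y' * z' = 1 := by
  rw [Submodule.add_eq_sup, FractionalIdeal.coeIdeal_sup] at hx hy hz hw
  rw [add_mul] at hy hz
  rw [FractionalIdeal.mem_add] at hx hy hz hw
  obtain ⟨x₁, hx₁, x₂, hx₂, rfl⟩ := hx
  obtain ⟨y₁, hy₁, y₂, hy₂, rfl⟩ := hy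
  obtain ⟨z₁, hz₁, z₂, hz₂, rfl⟩ := hz
  obtain ⟨w₁, hw₁, w₂, hw₂, rfl⟩ := hw
  have hle : ∀ (𝔡 : Ideal R) (D : FractionalIdeal R⁰ K),
      (𝔡 : FractionalIdeal R⁰ K) * D ≤ D := fun 𝔡 D =>
    (mul_le_mul_left FractionalIdeal.coeIdeal_le_one D).trans_eq (one_mul D)
  have h1 : ∀ (𝔡 : Ideal R), (𝔡 : FractionalIdeal R⁰ K) ≤ 1 := fun 𝔡 =>
    FractionalIdeal.coeIdeal_le_one
  have one_mem : (1 : K) ∈ (1 : FractionalIdeal R⁰ K) := FractionalIdeal.one_mem_one _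
  have one_add : ∀ {𝔡 : Ideal R} {k : K}, k ∈ (𝔡 : FractionalIdeal R⁰ K) →
      1 + k ∈ (1 : FractionalIdeal R⁰ K) := fun {𝔡 k} hk =>
    (1 : FractionalIdeal R⁰ K).coeToSubmodule.add_mem one_mem (h1 𝔡 hk)
  have hCB : C * B = 1 := by rw [mul_comm, hBC]
  have hdet_a : (1 + x₁) * (1 + w₁) - y₁ * z₁ - 1 ∈ (𝔞 : FractionalIdeal R⁰ K) := by
    have : (1 + x₁) * (1 + w₁) - y₁ * z₁ - 1 = x₁ + w₁ * (1 + x₁) - y₁ * z₁ := by ring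
    rw [this]
    exact Submodule.sub_mem (𝔞 : FractionalIdeal R⁰ K).coeToSubmodule
      (Submodule.add_mem _ hx₁ (FractionalIdeal.mul_mem_of_mem_one hw₁ (one_add hx₁)))
      (FractionalIdeal.mul_mem_of_mul_eq_one hBC hy₁ (hle _ _ hz₁))
  have hdet_b : (1 + x₁) * (1 + w₁) - y₁ * z₁ - 1 ∈ (𝔟 : FractionalIdeal R⁰ K) := by
    have : (1 + x₁) * (1 + w₁) - y₁ * z₁ - 1 =
        y₂ * z₁ + z₂ * (y₁ + y₂) - x₂ * (1 + w₁) - w₂ * (1 + x₁) - w₂ * x₂ := by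
      linear_combination hdet
    rw [this]
    refine Submodule.sub_mem (𝔟 : FractionalIdeal R⁰ K).coeToSubmodule
      (Submodule.sub_mem _ (Submodule.sub_mem _ (Submodule.add_mem _ ?_ ?_) ?_) ?_) ?_
    · exact FractionalIdeal.mul_mem_of_mul_eq_one hBC hy₂ (hle _ _ hz₁)
    · exact FractionalIdeal.mul_mem_of_mul_eq_one hCB hz₂
        (Submodule.add_mem B.coeToSubmodule (hle _ _ hy₁) (hle _ _ hy₂))
    · exact FractionalIdeal.mul_mem_of_mem_one hx₂ (one_add hw₁)
    · exact FractionalIdeal.mul_mem_of_mem_one hw₂ (one_add hx₁)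
    · exact FractionalIdeal.mul_mem_of_mem_one hw₂ (h1 _ hx₂)
  have hdet_ab : (1 + x₁) * (1 + w₁) - y₁ * z₁ - 1 ∈
      ((𝔞 ⊓ 𝔟 : Ideal R) : FractionalIdeal R⁰ K) := by
    obtain ⟨a, haa, h⟩ := (FractionalIdeal.mem_coeIdeal _).mp hdet_a
    obtain ⟨b, hbb, h'⟩ := (FractionalIdeal.mem_coeIdeal _).mp hdet_b
    obtain rfl : a = b := IsFractionRing.injective R K (h.trans h'.symm)
    exact (FractionalIdeal.mem_coeIdeal _).mpr ⟨a, ⟨haa, hbb⟩, h⟩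
  have hab : 𝔞 ⊓ 𝔟 ≠ ⊥ := fun h =>
    mul_ne_zero ha hb (le_bot_iff.mp (Ideal.mul_le_inf.trans h.le))
  obtain ⟨x', y', z', w', hx', hy', hz', hw', hd⟩ :=
    exists_det_eq_one_of_det_sub_one_mem hBC hab (one_add hx₁) (hle _ _ hy₁) (hle _ _ hz₁)
      (one_add hw₁) hdet_ab
  have hA : ((𝔞 ⊓ 𝔟 : Ideal R) : FractionalIdeal R⁰ K) ≤ 𝔞 :=
    (FractionalIdeal.coeIdeal_le_coeIdeal K).mpr inf_le_left
  have hB : ((𝔞 ⊓ 𝔟 : Ideal R) : FractionalIdeal R⁰ K) ≤ 𝔟 :=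
    (FractionalIdeal.coeIdeal_le_coeIdeal K).mpr inf_le_right
  have from_left : ∀ {D : FractionalIdeal R⁰ K} {k k₁ : K}, k₁ ∈ D → k - k₁ ∈ D → k ∈ D :=
    fun {D k k₁} h h' => by simpa using D.coeToSubmodule.add_mem h' h
  have from_right : ∀ {D : FractionalIdeal R⁰ K} {k k₁ k₂ : K}, k₂ ∈ D → k - k₁ ∈ D →
      k₁ + k₂ - k ∈ D := fun {D k k₁ k₂} h h' => by
    have := D.coeToSubmodule.sub_mem h h'
    rwa [show k₂ - (k - k₁) = k₁ + k₂ - k by ring] at this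
  have ex : x' - 1 - x₁ = x' - (1 + x₁) := by ring
  have ew : w' - 1 - w₁ = w' - (1 + w₁) := by ring
  refine ⟨x' - 1, y', z', w' - 1, ⟨from_left hx₁ ?_, from_left hy₁ (mul_le_mul_left hA B hy'),
    from_left hz₁ (mul_le_mul_left hA C hz'), from_left hw₁ ?_⟩,
    ⟨from_right hx₂ ?_, from_right hy₂ (mul_le_mul_left hB B hy'),
    from_right hz₂ (mul_le_mul_left hB C hz'), from_right hw₂ ?_⟩, ?_⟩
  · rw [ex]; exact hA hx'
  · rw [ew]; exact hA hw'
  · rw [ex]; exact hB hx'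
  · rw [ew]; exact hB hw'
  · linear_combination hd

end Arithmetic

section Lattice

variable {L : Type*} [AddCommGroup L] [Module R L]

/-- A non-zero finitely generated torsion-free module over a Dedekind domain splits off a non-zero
ideal. -/
theorem exists_linearEquiv_prod_ideal [Module.Finite R L] [Module.IsTorsionFree R L]
    [Nontrivial L] :
    ∃ (N : Submodule R L) (I : Ideal R), I ≠ ⊥ ∧ Nonempty (L ≃ₗ[R] N × I) ∧
      Module.finrank R N + 1 = Module.finrank R L := by
  have : Module.FinitePresentation R L := Module.finitePresentation_of_finite R L
  have : Module.Projective R L := Module.Flat.projective_of_finitePresentation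
  obtain ⟨v, hv⟩ := exists_ne (0 : L)
  obtain ⟨φ, hφ⟩ : ∃ φ : Module.Dual R L, φ v ≠ 0 := by
    by_contra! h
    exact hv ((Module.forall_dual_apply_eq_zero_iff R v).mp h)
  let I : Ideal R := LinearMap.range φ
  have hI : I ≠ ⊥ := fun h => hφ (by
    have : φ v ∈ I := ⟨v, rfl⟩
    rwa [h] at this)
  have : Module.FinitePresentation R I := Module.finitePresentation_of_finite R I
  have : Module.Projective R I := Module.Flat.projective_of_finitePresentation
  obtain ⟨s, hs⟩ := LinearMap.exists_rightInverse_of_surjective φ.rangeRestrict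
    φ.range_rangeRestrict
  have hex : Function.Exact (LinearMap.ker φ).subtype φ.rangeRestrict := by
    have := LinearMap.exact_subtype_ker_map φ.rangeRestrict
    rwa [LinearMap.ker_rangeRestrict] at this
  obtain ⟨e, -⟩ := hex.splitSurjectiveEquiv (Submodule.injective_subtype _) ⟨s, hs⟩
  refine ⟨LinearMap.ker φ, I, hI, ⟨e⟩, ?_⟩
  have : Nontrivial I := Submodule.nontrivial_iff_ne_bot.mpr hI
  have h1 : Module.finrank R I = 1 := by
    refine le_antisymm ?_ (Module.finrank_pos_iff.mpr inferInstance)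
    simpa using Submodule.finrank_le (I : Submodule R R)
  have h2 := (LinearMap.ker φ).finrank_quotient_add_finrank
  rw [φ.quotKerEquivRange.finrank_eq] at h2
  change Module.finrank R I + _ = _ at h2
  omega

variable {K : Type*} [Field K] [Algebra R K] [IsFractionRing R K]

/-- `ι` identifies `L` with the lattice `I × J` in `K × K`. -/
structure IsIdealSum (ι : L →ₗ[R] K × K) (I J : FractionalIdeal R⁰ K) : Prop where
  left_ne_zero : I ≠ 0
  right_ne_zero : J ≠ 0
  injective : Function.Injective ι
  exists_iff : ∀ u v : K, (∃ l, ι l = (u, v)) ↔ u ∈ I ∧ v ∈ J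
  bijective : Function.Bijective (LinearMap.liftBaseChange K ι)

variable (K) in
/-- A rank two lattice over a Dedekind domain is a direct sum of two ideals. -/
theorem exists_isIdealSum [Module.Finite R L] [Module.IsTorsionFree R L]
    (hrank : Module.finrank R L = 2) :
    ∃ (ι : L →ₗ[R] K × K) (I J : FractionalIdeal R⁰ K), IsIdealSum ι I J := by
  have : Nontrivial L := Module.nontrivial_of_finrank_pos (R := R) (by omega)
  obtain ⟨N, J, hJ, ⟨e⟩, hN⟩ := exists_linearEquiv_prod_ideal (R := R) (L := L)
  have : Nontrivial N := Module.nontrivial_of_finrank_pos (R := R) (by omega)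
  obtain ⟨N', I, hI, ⟨e'⟩, hN'⟩ := exists_linearEquiv_prod_ideal (R := R) (L := N)
  have : Subsingleton N' := Module.finrank_zero_iff.mp (show Module.finrank R N' = 0 by omega)
  let p : I →ₗ[R] K := Algebra.linearMap R K ∘ₗ Submodule.subtype I
  let q : J →ₗ[R] K := Algebra.linearMap R K ∘ₗ Submodule.subtype J
  have hp : Function.Injective p := (IsFractionRing.injective R K).comp Subtype.val_injective
  have hq : Function.Injective q := (IsFractionRing.injective R K).comp Subtype.val_injective
  let ι : L →ₗ[R] K × K :=
    (p ∘ₗ LinearMap.snd R N' I ∘ₗ e'.toLinearMap).prodMap q ∘ₗ e.toLinearMap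
  have hι : ∀ l, ι l = (p (e' (e l).1).2, q (e l).2) := fun l => rfl
  have hinj : Function.Injective ι := by
    intro l l' h
    rw [hι, hι, Prod.mk.injEq] at h
    refine e.injective (Prod.ext (e'.injective (Prod.ext (Subsingleton.elim _ _) (hp h.1)))
      (hq h.2))
  have hiff : ∀ u v : K, (∃ l, ι l = (u, v)) ↔
      u ∈ (I : FractionalIdeal R⁰ K) ∧ v ∈ (J : FractionalIdeal R⁰ K) := by
    intro u v
    rw [FractionalIdeal.mem_coeIdeal, FractionalIdeal.mem_coeIdeal]
    constructor
    · rintro ⟨l, hl⟩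
      rw [hι, Prod.mk.injEq] at hl
      exact ⟨⟨_, (e' (e l).1).2.2, hl.1⟩, ⟨_, (e l).2.2, hl.2⟩⟩
    · rintro ⟨⟨a, ha, rfl⟩, ⟨b, hb, rfl⟩⟩
      refine ⟨e.symm (e'.symm (0, ⟨a, ha⟩), ⟨b, hb⟩), ?_⟩
      rw [hι]
      simp [p, q]
  refine ⟨ι, I, J, FractionalIdeal.coeIdeal_ne_zero.mpr hI, FractionalIdeal.coeIdeal_ne_zero.mpr hJ,
    hinj, hiff, ?_⟩
  have hsurj : Function.Surjective (LinearMap.liftBaseChange K ι) := by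
    obtain ⟨a, ha, ha0⟩ := Submodule.exists_mem_ne_zero_of_ne_bot hI
    obtain ⟨b, hb, hb0⟩ := Submodule.exists_mem_ne_zero_of_ne_bot hJ
    have ha0' : algebraMap R K a ≠ 0 := by simpa using ha0
    have hb0' : algebraMap R K b ≠ 0 := by simpa using hb0
    obtain ⟨l, hl⟩ := (hiff (algebraMap R K a) 0).mpr
      ⟨FractionalIdeal.mem_coeIdeal_of_mem _ ha, FractionalIdeal.zero_mem _⟩
    obtain ⟨l', hl'⟩ := (hiff 0 (algebraMap R K b)).mpr
      ⟨FractionalIdeal.zero_mem _, FractionalIdeal.mem_coeIdeal_of_mem _ hb⟩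
    rintro ⟨u, v⟩
    refine ⟨(u / algebraMap R K a) ⊗ₜ[R] l + (v / algebraMap R K b) ⊗ₜ[R] l', ?_⟩
    simp [hl, hl', ha0', hb0']
  refine ⟨(LinearMap.injective_iff_surjective_of_finrank_eq_finrank ?_).mpr hsurj, hsurj⟩
  have : Module.finrank K (TensorProduct R K L) = Module.finrank R L :=
    (TensorProduct.isBaseChange R L K).finrank_eq
  rw [this, hrank]
  simp

namespace IsIdealSum

variable {ι : L →ₗ[R] K × K} {I J : FractionalIdeal R⁰ K}

omit [IsDedekindDomain R] [IsFractionRing R K] in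
theorem mem_smul_top_iff (h : IsIdealSum ι I J) (𝔡 : Ideal R) (l : L) :
    l ∈ 𝔡 • (⊤ : Submodule R L) ↔
      (ι l).1 ∈ (𝔡 : FractionalIdeal R⁰ K) * I ∧ (ι l).2 ∈ (𝔡 : FractionalIdeal R⁰ K) * J := by
  constructor
  · intro hl
    induction hl using Submodule.smul_induction_on' with
    | smul r hr n _ =>
      obtain ⟨h1, h2⟩ := (h.exists_iff (ι n).1 (ι n).2).mp ⟨n, rfl⟩
      rw [map_smul, Prod.smul_fst, Prod.smul_snd, Algebra.smul_def, Algebra.smul_def]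
      exact ⟨FractionalIdeal.mul_mem_mul (FractionalIdeal.mem_coeIdeal_of_mem _ hr) h1,
        FractionalIdeal.mul_mem_mul (FractionalIdeal.mem_coeIdeal_of_mem _ hr) h2⟩
    | add x _ y _ hx hy =>
      rw [map_add]
      exact ⟨Submodule.add_mem (_ * I : FractionalIdeal R⁰ K).coeToSubmodule hx.1 hy.1,
        Submodule.add_mem (_ * J : FractionalIdeal R⁰ K).coeToSubmodule hx.2 hy.2⟩
  · rintro ⟨h1, h2⟩
    have left : ∀ u ∈ (𝔡 : FractionalIdeal R⁰ K) * I,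
        ∃ n ∈ 𝔡 • (⊤ : Submodule R L), ι n = (u, 0) := by
      intro u hu
      refine FractionalIdeal.mul_induction_on hu (fun i hi j hj => ?_) ?_
      · obtain ⟨d, hd, rfl⟩ := (FractionalIdeal.mem_coeIdeal _).mp hi
        obtain ⟨n, hn⟩ := (h.exists_iff j 0).mpr ⟨hj, FractionalIdeal.zero_mem _⟩
        exact ⟨d • n, Submodule.smul_mem_smul hd trivial, by simp [hn, Algebra.smul_def]⟩
      · rintro x y ⟨n, hn, e⟩ ⟨n', hn', e'⟩
        exact ⟨n + n', Submodule.add_mem _ hn hn', by simp [e, e']⟩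
    have right : ∀ u ∈ (𝔡 : FractionalIdeal R⁰ K) * J,
        ∃ n ∈ 𝔡 • (⊤ : Submodule R L), ι n = (0, u) := by
      intro u hu
      refine FractionalIdeal.mul_induction_on hu (fun i hi j hj => ?_) ?_
      · obtain ⟨d, hd, rfl⟩ := (FractionalIdeal.mem_coeIdeal _).mp hi
        obtain ⟨n, hn⟩ := (h.exists_iff 0 j).mpr ⟨FractionalIdeal.zero_mem _, hj⟩
        exact ⟨d • n, Submodule.smul_mem_smul hd trivial, by simp [hn, Algebra.smul_def]⟩
      · rintro x y ⟨n, hn, e⟩ ⟨n', hn', e'⟩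
        exact ⟨n + n', Submodule.add_mem _ hn hn', by simp [e, e']⟩
    obtain ⟨n, hn, e⟩ := left _ h1
    obtain ⟨n', hn', e'⟩ := right _ h2
    have : l = n + n' := h.injective (by rw [map_add, e, e']; simp)
    rw [this]
    exact Submodule.add_mem _ hn hn'

omit [IsDedekindDomain R] [IsFractionRing R K] in
/-- The determinant of the base change of an endomorphism of `L` given by a matrix. -/
theorem det_baseChange (h : IsIdealSum ι I J) (f : L →ₗ[R] L) {x y z w : K}
    (hf : ∀ l, ι (f l) = (x * (ι l).1 + y * (ι l).2, z * (ι l).1 + w * (ι l).2)) :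
    LinearMap.det (f.baseChange K) = x * w - y * z := by
  let E := LinearEquiv.ofBijective _ h.bijective
  let b := Module.Basis.finTwoProd K
  have key : Matrix.toLin b b !![x, y; z, w] =
      E.toLinearMap ∘ₗ f.baseChange K ∘ₗ E.symm.toLinearMap := by
    suffices Matrix.toLin b b !![x, y; z, w] ∘ₗ E.toLinearMap =
        E.toLinearMap ∘ₗ f.baseChange K by
      rw [← LinearMap.comp_assoc, ← this, LinearMap.comp_assoc]
      ext <;> simp
    ext l : 3
    simp [E, b, hf, Matrix.toLin_finTwoProd_apply]
  rw [← LinearMap.det_conj _ E, ← key, LinearMap.det_toLin, Matrix.det_fin_two_of]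

/-- Endomorphisms of `L` with image in `𝔡 L` are given by matrices with entries in `𝔡`-multiples
of the appropriate fractional ideals. -/
theorem exists_matrix (h : IsIdealSum ι I J) (𝔡 : Ideal R) (f : L →ₗ[R] L)
    (hf : ∀ l, f l ∈ 𝔡 • (⊤ : Submodule R L)) :
    ∃ x y z w : K, (x ∈ (𝔡 : FractionalIdeal R⁰ K) ∧ y ∈ (𝔡 : FractionalIdeal R⁰ K) * (I / J) ∧
      z ∈ (𝔡 : FractionalIdeal R⁰ K) * (J / I) ∧ w ∈ (𝔡 : FractionalIdeal R⁰ K)) ∧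
      ∀ l, ι (f l) = (x * (ι l).1 + y * (ι l).2, z * (ι l).1 + w * (ι l).2) := by
  let E := LinearEquiv.ofBijective _ h.bijective
  let G : K × K →ₗ[K] K × K := E.toLinearMap ∘ₗ f.baseChange K ∘ₗ E.symm.toLinearMap
  have hG : ∀ l, G (ι l) = ι (f l) := by
    intro l
    have : E.symm (ι l) = 1 ⊗ₜ[R] l := by
      rw [LinearEquiv.symm_apply_eq]; simp [E]
    simp [G, this]
    simp [E]
  have hGuv : ∀ u v : K, G (u, v) = u • G (1, 0) + v • G (0, 1) := by
    intro u v
    rw [← map_smul, ← map_smul, ← map_add]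
    simp
  have hI := h.left_ne_zero
  have hJ := h.right_ne_zero
  have colI : ∀ u ∈ I, (G (1, 0)).1 * u ∈ (𝔡 : FractionalIdeal R⁰ K) * I ∧
      (G (1, 0)).2 * u ∈ (𝔡 : FractionalIdeal R⁰ K) * J := by
    intro u hu
    obtain ⟨l, hl⟩ := (h.exists_iff u 0).mpr ⟨hu, FractionalIdeal.zero_mem _⟩
    have := (h.mem_smul_top_iff 𝔡 _).mp (hf l)
    rw [← hG, hl, hGuv] at this
    simpa [mul_comm u] using this
  have colJ : ∀ u ∈ J, (G (0, 1)).1 * u ∈ (𝔡 : FractionalIdeal R⁰ K) * I ∧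
      (G (0, 1)).2 * u ∈ (𝔡 : FractionalIdeal R⁰ K) * J := by
    intro u hu
    obtain ⟨l, hl⟩ := (h.exists_iff 0 u).mpr ⟨FractionalIdeal.zero_mem _, hu⟩
    have := (h.mem_smul_top_iff 𝔡 _).mp (hf l)
    rw [← hG, hl, hGuv] at this
    simpa [mul_comm u] using this
  refine ⟨(G (1, 0)).1, (G (0, 1)).1, (G (1, 0)).2, (G (0, 1)).2, ⟨?_, ?_, ?_, ?_⟩, fun l => ?_⟩
  · rw [← mul_div_cancel_right₀ (𝔡 : FractionalIdeal R⁰ K) hI,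
      FractionalIdeal.mem_div_iff_of_ne_zero hI]
    exact fun u hu => (colI u hu).1
  · rw [← mul_div_assoc, FractionalIdeal.mem_div_iff_of_ne_zero hJ]
    exact fun u hu => (colJ u hu).1
  · rw [← mul_div_assoc, FractionalIdeal.mem_div_iff_of_ne_zero hI]
    exact fun u hu => (colI u hu).2
  · rw [← mul_div_cancel_right₀ (𝔡 : FractionalIdeal R⁰ K) hJ,
      FractionalIdeal.mem_div_iff_of_ne_zero hJ]
    exact fun u hu => (colJ u hu).2
  · rw [← hG, show ι l = ((ι l).1, (ι l).2) from rfl, hGuv]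
    ext <;> simp [mul_comm]

/-- Matrices with entries in `𝔡`-multiples of the appropriate fractional ideals define
endomorphisms of `L` with image in `𝔡 L`. -/
theorem exists_linearMap (h : IsIdealSum ι I J) (𝔡 : Ideal R) {x y z w : K}
    (hx : x ∈ (𝔡 : FractionalIdeal R⁰ K)) (hy : y ∈ (𝔡 : FractionalIdeal R⁰ K) * (I / J))
    (hz : z ∈ (𝔡 : FractionalIdeal R⁰ K) * (J / I)) (hw : w ∈ (𝔡 : FractionalIdeal R⁰ K)) :
    ∃ f : L →ₗ[R] L, (∀ l, f l ∈ 𝔡 • (⊤ : Submodule R L)) ∧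
      ∀ l, ι (f l) = (x * (ι l).1 + y * (ι l).2, z * (ι l).1 + w * (ι l).2) := by
  have hI := h.left_ne_zero
  have hJ := h.right_ne_zero
  rw [← mul_div_assoc, FractionalIdeal.mem_div_iff_of_ne_zero hJ] at hy
  rw [← mul_div_assoc, FractionalIdeal.mem_div_iff_of_ne_zero hI] at hz
  have hle : ∀ D : FractionalIdeal R⁰ K, (𝔡 : FractionalIdeal R⁰ K) * D ≤ D := fun D =>
    (mul_le_mul_left FractionalIdeal.coeIdeal_le_one D).trans_eq (one_mul D)
  have hmem : ∀ l, x * (ι l).1 + y * (ι l).2 ∈ (𝔡 : FractionalIdeal R⁰ K) * I ∧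
      z * (ι l).1 + w * (ι l).2 ∈ (𝔡 : FractionalIdeal R⁰ K) * J := by
    intro l
    obtain ⟨h1, h2⟩ := (h.exists_iff (ι l).1 (ι l).2).mp ⟨l, rfl⟩
    exact ⟨Submodule.add_mem (_ * I : FractionalIdeal R⁰ K).coeToSubmodule
        (FractionalIdeal.mul_mem_mul hx h1) (hy _ h2),
      Submodule.add_mem (_ * J : FractionalIdeal R⁰ K).coeToSubmodule
        (hz _ h1) (FractionalIdeal.mul_mem_mul hw h2)⟩
  have hex : ∀ l, ∃ l', ι l' = (x * (ι l).1 + y * (ι l).2, z * (ι l).1 + w * (ι l).2) :=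
    fun l => (h.exists_iff _ _).mpr ⟨hle _ (hmem l).1, hle _ (hmem l).2⟩
  choose f hf using hex
  refine ⟨{ toFun := f
            map_add' := fun a b => h.injective ?_
            map_smul' := fun r a => h.injective ?_ }, fun l => ?_, hf⟩
  · rw [map_add, hf, hf, hf, map_add]
    ext <;> simp <;> ring
  · rw [map_smul, hf, hf, map_smul]
    ext <;> simp [Algebra.smul_def] <;> ring
  · rw [h.mem_smul_top_iff]
    change (ι (f l)).1 ∈ _ ∧ (ι (f l)).2 ∈ _
    rw [hf]
    exact hmem l

end IsIdealSum

end Lattice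

end CongruenceProduct

/-- The product of two congruence subgroups lies in the congruence subgroup of the sum. -/
theorem congSet_mul_subset {K : Type*} [Field K] [NumberField K]
    {L : Type*} [AddCommGroup L] [Module (NumberField.RingOfIntegers K) L]
    (𝔞 𝔟 : Ideal (NumberField.RingOfIntegers K)) :
    congSet K L 𝔞 * congSet K L 𝔟 ⊆ congSet K L (𝔞 + 𝔟) := by
  rintro _ ⟨g, ⟨hgd, hg⟩, h, ⟨hhd, hh⟩, rfl⟩
  refine ⟨?_, fun x => ?_⟩
  · change LinearMap.det (LinearMap.baseChange K (g.toLinearMap ∘ₗ h.toLinearMap)) = 1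
    rw [LinearMap.baseChange_comp, LinearMap.det_comp, hgd, hhd, one_mul]
  · change g (h x) - x ∈ _
    rw [← sub_add_sub_cancel (g (h x)) (h x) x]
    exact Submodule.add_mem _ (Submodule.smul_mono_left le_sup_left (hg _))
      (Submodule.smul_mono_left le_sup_right (hh _))

/-- Lemma `congruence-product-maximal-order`.
Let `L` be a finitely generated projective `𝓞_K`-module of constant rank two and
`𝒢(𝔞) = {g ∈ SL(L) : (g - id)(L) ⊆ 𝔞L}`.  Then for any two non-zero ideals
`𝔞, 𝔟 ⊆ 𝓞_K`, the setwise product satisfies `𝒢(𝔞)·𝒢(𝔟) = 𝒢(𝔞 + 𝔟)`. -/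
theorem statement16 (K : Type*) [Field K] [NumberField K]
    (L : Type*) [AddCommGroup L] [Module (NumberField.RingOfIntegers K) L]
    [Module.Finite (NumberField.RingOfIntegers K) L]
    [Module.Projective (NumberField.RingOfIntegers K) L]
    (hrank : Module.finrank (NumberField.RingOfIntegers K) L = 2)
    (𝔞 𝔟 : Ideal (NumberField.RingOfIntegers K)) (ha : 𝔞 ≠ ⊥) (hb : 𝔟 ≠ ⊥) :
    congSet K L 𝔞 * congSet K L 𝔟 = congSet K L (𝔞 + 𝔟) := by
  refine (congSet_mul_subset 𝔞 𝔟).antisymm ?_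
  rintro g ⟨hgd, hg⟩
  obtain ⟨ι, I, J, hι⟩ := exists_isIdealSum K hrank
  have hBC : (I / J) * (J / I) = 1 := by
    rw [div_mul_div_cancel₀ hι.right_ne_zero, div_self hι.left_ne_zero]
  obtain ⟨x, y, z, w, ⟨hx, hy, hz, hw⟩, hf⟩ :=
    hι.exists_matrix (𝔞 + 𝔟) (g.toLinearMap - LinearMap.id) hg
  have hg' : ∀ l, ι (g l) = ((1 + x) * (ι l).1 + y * (ι l).2, z * (ι l).1 + (1 + w) * (ι l).2) := by
    intro l
    have h1 : g l = (g.toLinearMap - LinearMap.id : L →ₗ[_] L) l + l := by simp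
    rw [h1, map_add, hf]
    ext <;> simp <;> ring
  have hdet : (1 + x) * (1 + w) - y * z = 1 :=
    (hι.det_baseChange g.toLinearMap hg').symm.trans hgd
  obtain ⟨x', y', z', w', ⟨hx', hy', hz', hw'⟩, ⟨hx₂, hy₂, hz₂, hw₂⟩, hdet'⟩ :=
    exists_det_eq_one_congruent hBC ha hb hx hy hz hw hdet
  obtain ⟨m, hm, hmι⟩ := hι.exists_linearMap 𝔞 hx' hy' hz' hw'
  obtain ⟨n, -, hnι⟩ := hι.exists_linearMap 𝔞 hw'
    (((𝔞 : FractionalIdeal _ K) * (I / J)).coeToSubmodule.neg_mem hy' : -y' ∈ _ * (I / J))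
    (((𝔞 : FractionalIdeal _ K) * (J / I)).coeToSubmodule.neg_mem hz' : -z' ∈ _ * (J / I)) hx'
  obtain ⟨d, hd, hdι⟩ := hι.exists_linearMap 𝔟 hx₂ hy₂ hz₂ hw₂
  let h : L ≃ₗ[NumberField.RingOfIntegers K] L :=
    LinearEquiv.ofLinearMap (LinearMap.id + m) (LinearMap.id + n)
      (by
        ext l
        apply hι.injective
        simp only [LinearMap.comp_apply, LinearMap.add_apply, LinearMap.id_apply, map_add, hmι, hnι]
        ext
        · simp; linear_combination (ι l).1 * hdet'
        · simp; linear_combination (ι l).2 * hdet')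
      (by
        ext l
        apply hι.injective
        simp only [LinearMap.comp_apply, LinearMap.add_apply, LinearMap.id_apply, map_add, hmι, hnι]
        ext
        · simp; linear_combination (ι l).1 * hdet'
        · simp; linear_combination (ι l).2 * hdet')
  have hh : ∀ l, h l = l + m l := fun l => rfl
  have hhd : LinearMap.det (LinearMap.baseChange K h.toLinearMap) = 1 := by
    rw [hι.det_baseChange (x := 1 + x') (y := y') (z := z') (w := 1 + w') h.toLinearMap, hdet']
    intro l
    change ι (l + m l) = _
    rw [map_add, hmι]
    ext <;> simp <;> ring
  have hgh : ∀ l, g l - h l = d l := by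
    intro l
    apply hι.injective
    rw [map_sub, hg', hh, map_add, hmι, hdι]
    ext <;> simp <;> ring
  refine ⟨h, ⟨hhd, fun l => ?_⟩, h⁻¹ * g, ⟨?_, fun l => ?_⟩, mul_inv_cancel_left h g⟩
  · rw [hh, add_sub_cancel_left]
    exact hm l
  · have hcomp : h.toLinearMap ∘ₗ (h⁻¹ * g : L ≃ₗ[_] L).toLinearMap = g.toLinearMap := by
      ext l
      exact h.apply_symm_apply (g l)
    have := congrArg (fun f => LinearMap.det (LinearMap.baseChange K f)) hcomp
    simp only [LinearMap.baseChange_comp, LinearMap.det_comp] at this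
    rwa [hhd, one_mul, hgd] at this
  · have hl : (h⁻¹ * g) l - l = h.symm (d l) := by
      rw [← hgh, map_sub, h.symm_apply_apply]
      rfl
    rw [hl]
    exact Submodule.smul_top_le_comap_smul_top 𝔟 h.symm.toLinearMap (hd l)
end
end

section
/- Let K be a number field with ring of integers O_K, and let L be a finitely generated projective O_K-module of constant rank two. Set 𝒢 := SL(L) = {g ∈ Aut_{O_K}(L) : det(g) = 1}, acting on the set of one-dimensional K-subspaces (K-lines) ℓ ⊆ L ⊗_{O_K} K. Then the map sending a K-line ℓ to the ideal class of the rank-one projective O_K-module L ∩ ℓ induces a bijection between the set of 𝒢-orbits of K-lines and the ideal class group of O_K. In particular, the number of 𝒢-orbits equals the class number h_K of K. -/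
set_option synthInstance.maxHeartbeats 400000
set_option maxHeartbeats 1000000

open scoped TensorProduct

noncomputable section

open scoped nonZeroDivisors
open FractionalIdeal

section FractionalIdeals

variable {R K : Type*} [CommRing R] [Field K] [Algebra R K] [IsFractionRing R K]

theorem FractionalIdeal.mem_spanSingleton_mul_iff {A : FractionalIdeal R⁰ K} {c x : K}
    (hc : c ≠ 0) : x ∈ spanSingleton R⁰ c * A ↔ c⁻¹ * x ∈ A := by
  rw [mem_singleton_mul]
  constructor
  · rintro ⟨y, hy, rfl⟩
    rwa [inv_mul_cancel_left₀ hc]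
  · exact fun h => ⟨_, h, by rw [mul_inv_cancel_left₀ hc]⟩

theorem Ideal.exists_forall_eq_mul (I : Ideal R) (ψ : I →ₗ[R] K) :
    ∃ c : K, ∀ x : I, ψ x = c * algebraMap R K x := by
  have := (IsFractionRing.injective R K).isDomain (algebraMap R K)
  by_cases hI : I = ⊥
  · refine ⟨0, fun x => ?_⟩
    subst hI
    simp [Subsingleton.elim x 0]
  · obtain ⟨a, haI, ha⟩ := Submodule.exists_mem_ne_zero_of_ne_bot hI
    have ha' : algebraMap R K a ≠ 0 := by simpa using ha
    refine ⟨ψ ⟨a, haI⟩ / algebraMap R K a, fun x => ?_⟩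
    have : a • ψ x = (x : R) • ψ ⟨a, haI⟩ := by
      rw [← map_smul, ← map_smul]
      congr 1
      ext
      simp [mul_comm]
    rw [Algebra.smul_def, Algebra.smul_def] at this
    field_simp
    linear_combination this

variable [IsDedekindDomain R]

theorem FractionalIdeal.mem_iff_spanSingleton_mul_inv_le_one {A : FractionalIdeal R⁰ K}
    (hA : A ≠ 0) {x : K} : x ∈ A ↔ spanSingleton R⁰ x * A⁻¹ ≤ 1 := by
  rw [← le_div_iff_mul_le (inv_ne_zero hA), one_div, inv_inv, spanSingleton_le_iff_mem]

theorem ClassGroup.mk_eq_mk_iff_exists_spanSingleton_mul {I J : (FractionalIdeal R⁰ K)ˣ} :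
    ClassGroup.mk K I = ClassGroup.mk K J ↔
      ∃ c : K, c ≠ 0 ∧ spanSingleton R⁰ c * (I : FractionalIdeal R⁰ K) = J := by
  rw [← (ClassGroup.equiv K).injective.eq_iff, ClassGroup.equiv_mk, ClassGroup.equiv_mk,
    QuotientGroup.mk'_eq_mk']
  simp only [canonicalEquiv_self, MonoidHom.mem_range]
  constructor
  · rintro ⟨_, ⟨c, rfl⟩, h⟩
    refine ⟨c, c.ne_zero, ?_⟩
    have := congrArg Units.val h
    simpa [mul_comm] using this
  · rintro ⟨c, hc, h⟩
    refine ⟨_, ⟨Units.mk0 c hc, rfl⟩, Units.ext ?_⟩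
    simpa [mul_comm] using h

/-- Two nonzero fractional ideals can be rescaled so as to become comaximal. -/
theorem FractionalIdeal.exists_spanSingleton_mul_add_eq_one {P Q : FractionalIdeal R⁰ K}
    (hP : P ≠ 0) (hQ : Q ≠ 0) :
    ∃ a b : K, a ≠ 0 ∧ spanSingleton R⁰ a * P + spanSingleton R⁰ b * Q = 1 := by
  have integral (J : FractionalIdeal R⁰ K) :
      ∃ (a : K) (I : Ideal R), a ≠ 0 ∧ spanSingleton R⁰ a * J = I := by
    obtain ⟨a, I, ha, h⟩ := exists_eq_spanSingleton_mul J
    have ha' : algebraMap R K a ≠ 0 := by simpa using ha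
    refine ⟨algebraMap R K a, I, ha', ?_⟩
    rw [h, ← mul_assoc, spanSingleton_mul_spanSingleton, mul_inv_cancel₀ ha', spanSingleton_one,
      one_mul]
  obtain ⟨a, I, ha, hI⟩ := integral P
  obtain ⟨b, J, hb, hJ⟩ := integral Q⁻¹
  have span_ne {c : K} (hc : c ≠ 0) : spanSingleton R⁰ c ≠ 0 := spanSingleton_ne_zero_iff.2 hc
  have hI0 : (I : FractionalIdeal R⁰ K) ≠ 0 := hI ▸ mul_ne_zero (span_ne ha) hP
  have hJ0 : (J : FractionalIdeal R⁰ K) ≠ 0 := hJ ▸ mul_ne_zero (span_ne hb) (inv_ne_zero hQ)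
  obtain ⟨x, hx⟩ := IsDedekindDomain.exists_sup_span_eq (I := J * I) (J := J) Ideal.mul_le_left
    (mul_ne_zero (coeIdeal_ne_zero.1 hJ0) (coeIdeal_ne_zero.1 hI0))
  refine ⟨a, algebraMap R K x * b⁻¹, ha, ?_⟩
  have hx' := congrArg (fun I : Ideal R => (I : FractionalIdeal R⁰ K)) hx
  simp only [coeIdeal_sup, coeIdeal_mul, coeIdeal_span_singleton] at hx'
  have hJQ : spanSingleton R⁰ b⁻¹ * Q = (J : FractionalIdeal R⁰ K)⁻¹ := by
    rw [← hJ, mul_inv, inv_inv, spanSingleton_inv]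
  rw [hI, ← spanSingleton_mul_spanSingleton, mul_assoc, hJQ]
  calc (I : FractionalIdeal R⁰ K) + spanSingleton R⁰ (algebraMap R K x) * (↑J)⁻¹
      = (↑J * ↑I + spanSingleton R⁰ (algebraMap R K x)) * (↑J)⁻¹ := by
        rw [add_mul, mul_right_comm, mul_inv_cancel₀ hJ0, one_mul]
    _ = 1 := by rw [hx', mul_inv_cancel₀ hJ0]

/-- Given nonzero fractional ideals `A`, `B`, every fractional ideal `C` has the form
`a⁻¹ A ∩ b⁻¹ B`. -/
theorem FractionalIdeal.exists_mem_iff_mul_mem_and_mul_mem {A B C : FractionalIdeal R⁰ K}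
    (hA : A ≠ 0) (hB : B ≠ 0) (hC : C ≠ 0) :
    ∃ a b : K, a ≠ 0 ∧ ∀ t, t ∈ C ↔ t * a ∈ A ∧ t * b ∈ B := by
  obtain ⟨a, b, ha, h⟩ := exists_spanSingleton_mul_add_eq_one (P := A⁻¹ * C) (Q := B⁻¹ * C)
    (mul_ne_zero (inv_ne_zero hA) hC) (mul_ne_zero (inv_ne_zero hB) hC)
  refine ⟨a, b, ha, fun t => ?_⟩
  have hC' : C⁻¹ = spanSingleton R⁰ a * A⁻¹ + spanSingleton R⁰ b * B⁻¹ := by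
    refine (eq_inv_of_mul_eq_one_left ?_).symm
    rw [← h]; ring
  rw [mem_iff_spanSingleton_mul_inv_le_one hA, mem_iff_spanSingleton_mul_inv_le_one hB,
    mem_iff_spanSingleton_mul_inv_le_one hC, hC', mul_add, ← sup_eq_add, sup_le_iff,
    ← mul_assoc, ← mul_assoc, spanSingleton_mul_spanSingleton, spanSingleton_mul_spanSingleton]

end FractionalIdeals

namespace PlaneLattice

open Submodule (IsLattice)

variable {R K V : Type*} [CommRing R] [Field K] [Algebra R K] [IsFractionRing R K]
  [AddCommGroup V] [Module R V] [Module K V] (Λ : Submodule R V)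

/-- The determinant of a change of basis compares the products of coefficient ideals. -/
theorem spanSingleton_det_mul_eq [IsDedekindDomain R] {b b' : Module.Basis (Fin 2) K V}
    {A B A' B' : FractionalIdeal R⁰ K}
    (hb : ∀ p q : K, p • b 0 + q • b 1 ∈ Λ ↔ p ∈ A ∧ q ∈ B)
    (hb' : ∀ p q : K, p • b' 0 + q • b' 1 ∈ Λ ↔ p ∈ A' ∧ q ∈ B') :
    spanSingleton R⁰ (b.det b') * (A' * B') = A * B := by
  have key : ∀ {b b' : Module.Basis (Fin 2) K V} {A B A' B' : FractionalIdeal R⁰ K}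
      (_ : ∀ p q : K, p • b 0 + q • b 1 ∈ Λ ↔ p ∈ A ∧ q ∈ B)
      (_ : ∀ p q : K, p • b' 0 + q • b' 1 ∈ Λ ↔ p ∈ A' ∧ q ∈ B'),
      spanSingleton R⁰ (b.det b') * (A' * B') ≤ A * B := by
    intro b b' A B A' B' hb hb'
    have mem (x : V) (hx : x ∈ Λ) : b.repr x 0 ∈ A ∧ b.repr x 1 ∈ B := by
      rw [← hb, ← Fin.sum_univ_two fun i => b.repr x i • b i, b.sum_repr]
      exact hx
    rw [mul_le]
    intro d hd y hy
    obtain ⟨r, rfl⟩ := (mem_spanSingleton _).1 hd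
    rw [smul_mul_assoc]
    refine Submodule.smul_mem (A * B : FractionalIdeal R⁰ K).coeToSubmodule r ?_
    refine FractionalIdeal.mul_induction_on (C := fun y => b.det b' * y ∈ A * B) hy ?_ ?_
    · intro s hs t ht
      obtain ⟨h1, h2⟩ := mem (s • b' 0) (by simpa using (hb' s 0).2 ⟨hs, B'.zero_mem⟩)
      obtain ⟨h3, h4⟩ := mem (t • b' 1) (by simpa using (hb' 0 t).2 ⟨A'.zero_mem, ht⟩)
      have := Submodule.sub_mem (A * B : FractionalIdeal R⁰ K).coeToSubmodule
        (FractionalIdeal.mul_mem_mul h1 h4) (FractionalIdeal.mul_mem_mul h3 h2)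
      convert! this using 1
      simp only [Module.Basis.det_apply, Matrix.det_fin_two, Module.Basis.toMatrix_apply, map_smul,
        Finsupp.smul_apply, smul_eq_mul]
      ring
    · intro x y hx hy
      rw [mul_add]
      exact Submodule.add_mem (A * B : FractionalIdeal R⁰ K).coeToSubmodule hx hy
  refine le_antisymm (key hb hb') ?_
  have h := mul_le_mul_right (key hb' hb) (spanSingleton R⁰ (b.det b'))
  rwa [← mul_assoc, spanSingleton_mul_spanSingleton, Module.Basis.det_mul_det,
    Module.Basis.det_self, spanSingleton_one, one_mul] at h

theorem exists_smul_mem [IsScalarTower R K V] [Λ.IsLattice K] (v : V) :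
    ∃ r : R, r ≠ 0 ∧ r • v ∈ Λ := by
  have := (IsFractionRing.injective R K).isDomain (algebraMap R K)
  have hv : v ∈ Submodule.span K (Λ : Set V) := by
    rw [IsLattice.span_eq_top]; trivial
  induction hv using Submodule.span_induction with
  | mem x hx => exact ⟨1, one_ne_zero, by simpa using hx⟩
  | zero => exact ⟨1, one_ne_zero, by simp⟩
  | add x y _ _ hx hy =>
    obtain ⟨r, hr, hx⟩ := hx
    obtain ⟨s, hs, hy⟩ := hy
    refine ⟨r * s, mul_ne_zero hr hs, ?_⟩
    rw [smul_add, mul_comm, mul_smul, mul_comm, mul_smul]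
    exact Λ.add_mem (Λ.smul_mem _ hx) (Λ.smul_mem _ hy)
  | smul k x _ hx =>
    obtain ⟨r, hr, hx⟩ := hx
    obtain ⟨a, s, hs, rfl⟩ := IsFractionRing.div_surjective (A := R) k
    have hs0 := nonZeroDivisors.ne_zero hs
    have hs' : algebraMap R K s ≠ 0 := by simpa using hs0
    refine ⟨s * r, mul_ne_zero hs0 hr, ?_⟩
    have : (s * r) • (algebraMap R K a / algebraMap R K s) • x = a • r • x := by
      rw [← algebraMap_smul K (s * r), ← algebraMap_smul K a, ← algebraMap_smul K r, smul_smul,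
        smul_smul, map_mul]
      congr 1
      field_simp
    rw [this]
    exact Λ.smul_mem _ hx

variable [IsDedekindDomain R] [IsScalarTower R K V] [Λ.IsLattice K]

variable {Λ} in
/-- The fractional ideal of coefficients `t` with `t • v ∈ Λ`. -/
def coeffIdeal {v : V} (hv : v ≠ 0) : FractionalIdeal R⁰ K :=
  ⟨Λ.comap ((LinearMap.toSpanSingleton K V v).restrictScalars R), by
    have : IsNoetherian R Λ := isNoetherian_of_isNoetherianRing_of_finite R Λ
    apply isFractional_of_fg
    rw [← Module.Finite.iff_fg]
    let φ : Λ.comap ((LinearMap.toSpanSingleton K V v).restrictScalars R) →ₗ[R] Λ :=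
      ((LinearMap.toSpanSingleton K V v).restrictScalars R).restrict fun _ h => h
    refine Module.Finite.of_injective φ fun x y h => Subtype.ext ?_
    exact smul_left_injective K hv (congrArg Subtype.val h)⟩

theorem mem_coeffIdeal {v : V} (hv : v ≠ 0) {t : K} :
    t ∈ coeffIdeal (Λ := Λ) hv ↔ t • v ∈ Λ := Iff.rfl

theorem coeffIdeal_ne_zero {v : V} (hv : v ≠ 0) : coeffIdeal (K := K) (Λ := Λ) hv ≠ 0 := by
  obtain ⟨r, hr, h⟩ := exists_smul_mem (K := K) Λ v
  intro h0
  have : algebraMap R K r ∈ coeffIdeal (K := K) (Λ := Λ) hv := by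
    rwa [mem_coeffIdeal Λ, algebraMap_smul]
  rw [h0, mem_zero_iff] at this
  exact hr (by simpa using this)

theorem coeffIdeal_eq_spanSingleton_mul {v v' : V} (hv : v ≠ 0) (hv' : v' ≠ 0) {c : K}
    (hc : c ≠ 0) (h : ∀ t : K, t • v ∈ Λ ↔ (c * t) • v' ∈ Λ) :
    spanSingleton R⁰ c * coeffIdeal (Λ := Λ) hv = coeffIdeal (Λ := Λ) hv' := by
  ext t
  rw [mem_spanSingleton_mul_iff hc, mem_coeffIdeal Λ, mem_coeffIdeal Λ, h, mul_inv_cancel_left₀ hc]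

/-- The ideal class of `Λ ∩ K v`. -/
def lineClass {v : V} (hv : v ≠ 0) : ClassGroup R :=
  ClassGroup.mk K (Units.mk0 (coeffIdeal (K := K) (Λ := Λ) hv) (coeffIdeal_ne_zero Λ hv))

theorem lineClass_eq_iff {v v' : V} (hv : v ≠ 0) (hv' : v' ≠ 0) :
    lineClass (K := K) Λ hv = lineClass (K := K) Λ hv' ↔
      ∃ c : K, c ≠ 0 ∧ spanSingleton R⁰ c * coeffIdeal (Λ := Λ) hv = coeffIdeal (Λ := Λ) hv' :=
  ClassGroup.mk_eq_mk_iff_exists_spanSingleton_mul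

/-- A lattice in a plane splits as `A v ⊕ B w`, where `v` is any prescribed nonzero vector. -/
theorem exists_basis_forall_mem_iff (hV : Module.finrank K V = 2) {v : V} (hv : v ≠ 0) :
    ∃ (b : Module.Basis (Fin 2) K V) (B : FractionalIdeal R⁰ K), b 0 = v ∧ B ≠ 0 ∧
      ∀ p q : K, p • b 0 + q • b 1 ∈ Λ ↔ p ∈ coeffIdeal (Λ := Λ) hv ∧ q ∈ B := by
  have : FiniteDimensional K V := Module.finite_of_finrank_eq_succ hV
  obtain ⟨w₀, hw₀⟩ := exists_linearIndependent_pair_of_one_lt_finrank (R := K) (by omega) hv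
  let b₀ := basisOfLinearIndependentOfCardEqFinrank hw₀ (by simp [hV])
  have hb₀ : b₀ 0 = v := by simp [b₀]
  let π : V →ₗ[R] K := (b₀.coord 1).restrictScalars R
  have hπ (k : K) (x : V) : π (k • x) = k * π x := by simp [π]
  have hπv : π v = 0 := by simp [π, ← hb₀]
  have hsub {x : V} (hx : π x = 0) : ∃ k : K, x = k • v := by
    refine ⟨b₀.coord 0 x, ?_⟩
    have h1 : b₀.repr x 1 = 0 := hx
    have := b₀.sum_repr x
    rw [Fin.sum_univ_two, h1, zero_smul, add_zero, hb₀] at this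
    exact this.symm
  let B : FractionalIdeal R⁰ K :=
    ⟨Λ.map π, isFractional_of_fg ((IsLattice.fg (A := K) (M := Λ)).map π)⟩
  have hB {q : K} : q ∈ B ↔ ∃ x ∈ Λ, π x = q := Iff.rfl
  have hB0 : B ≠ 0 := by
    obtain ⟨r, hr, h⟩ := exists_smul_mem (K := K) Λ (b₀ 1)
    intro h0
    have : r • (1 : K) ∈ B := hB.2 ⟨_, h, by rw [map_smul]; simp [π]⟩
    rw [h0, mem_zero_iff] at this
    exact hr (by simpa using this)
  obtain ⟨w, hw1, hw⟩ : ∃ w : V, π w = 1 ∧ ∀ q ∈ B, q • w ∈ Λ := by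
    have h1 : (1 : K) ∈ B * B⁻¹ := by rw [mul_inv_cancel₀ hB0]; exact one_mem_one _
    refine FractionalIdeal.mul_induction_on (C := fun z => ∃ w : V, π w = z ∧ ∀ q ∈ B, q • w ∈ Λ)
      h1 ?_ ?_
    · rintro i hi j hj
      obtain ⟨x, hx, rfl⟩ := hB.1 hi
      refine ⟨j • x, by rw [hπ, mul_comm], fun q hq => ?_⟩
      obtain ⟨r, hr⟩ := (mem_one_iff _).1 ((mem_inv_iff hB0).1 hj q hq)
      rw [smul_smul, mul_comm, ← hr, algebraMap_smul]
      exact Λ.smul_mem _ hx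
    · rintro x y ⟨w, hw, h⟩ ⟨w', hw', h'⟩
      exact ⟨w + w', by rw [map_add, hw, hw'], fun q hq => by
        rw [smul_add]; exact Λ.add_mem (h q hq) (h' q hq)⟩
  have hli : LinearIndependent K ![v, w] := by
    rw [LinearIndependent.pair_iff]
    intro s t h
    have ht : t = 0 := by simpa [hπ, hπv, hw1] using congrArg π h
    subst ht
    exact ⟨by simpa [hv] using h, rfl⟩
  let b := basisOfLinearIndependentOfCardEqFinrank hli (by simp [hV])
  refine ⟨b, B, by simp [b], hB0, fun p q => ?_⟩
  have e0 : b 0 = v := by simp [b]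
  have e1 : b 1 = w := by simp [b]
  rw [e0, e1, mem_coeffIdeal Λ]
  constructor
  · intro h
    have hq : q ∈ B := hB.2 ⟨_, h, by simp [hπ, hπv, hw1]⟩
    exact ⟨by simpa using Λ.sub_mem h (hw q hq), hq⟩
  · rintro ⟨hp, hq⟩
    exact Λ.add_mem hp (hw q hq)

/-- Two lines meeting a lattice in isomorphic modules are exchanged by an automorphism of
determinant one. -/
theorem exists_det_eq_one_of_lineClass_eq (hV : Module.finrank K V = 2) {v v' : V} (hv : v ≠ 0)
    (hv' : v' ≠ 0) (h : lineClass (K := K) Λ hv = lineClass (K := K) Λ hv') :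
    ∃ (g : V →ₗ[K] V) (c : K), LinearMap.det g = 1 ∧ c ≠ 0 ∧ g v = c • v' ∧
      ∀ x, g x ∈ Λ ↔ x ∈ Λ := by
  obtain ⟨c, hc, h⟩ := (lineClass_eq_iff Λ hv hv').1 h
  have hcv' : c • v' ≠ 0 := smul_ne_zero hc hv'
  have hA : coeffIdeal (K := K) (Λ := Λ) hcv' = coeffIdeal (Λ := Λ) hv := by
    ext t
    rw [mem_coeffIdeal Λ, smul_smul, ← mem_coeffIdeal Λ hv', ← h, mem_spanSingleton_mul_iff hc,
      mul_comm, mul_inv_cancel_right₀ hc]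
  obtain ⟨b, B, hb0, hB0, hb⟩ := exists_basis_forall_mem_iff Λ hV hv
  obtain ⟨b', B', hb0', hB0', hb'⟩ := exists_basis_forall_mem_iff Λ hV hcv'
  rw [hA] at hb'
  have hd : b.det b' ≠ 0 := (b.isUnit_det b').ne_zero
  have hBB' : spanSingleton R⁰ (b.det b') * B' = B := by
    have := spanSingleton_det_mul_eq Λ hb hb'
    rw [mul_left_comm] at this
    exact mul_left_cancel₀ (coeffIdeal_ne_zero Λ hv) this
  let g : V →ₗ[K] V := b.constr K ![b' 0, (b.det b')⁻¹ • b' 1]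
  have hg0 : g (b 0) = b' 0 := by simp [g, b.constr_basis]
  have hg1 : g (b 1) = (b.det b')⁻¹ • b' 1 := by simp [g, b.constr_basis]
  refine ⟨g, c, ?_, hc, by rw [← hb0, hg0, hb0'], fun x => ?_⟩
  · have := b.det_comp g b
    rw [b.det_self, mul_one] at this
    rw [← this]
    have hdet : b.det b' * (b.det b')⁻¹ = 1 := mul_inv_cancel₀ hd
    rw [← hdet]
    simp only [Module.Basis.det_apply b, Matrix.det_fin_two, Module.Basis.toMatrix_apply,
      Function.comp_apply, hg0, hg1, map_smul, Finsupp.smul_apply, smul_eq_mul]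
    ring
  · have hx : x = b.repr x 0 • b 0 + b.repr x 1 • b 1 := by
      rw [← Fin.sum_univ_two fun i => b.repr x i • b i, b.sum_repr]
    rw [hx, map_add, map_smul, map_smul, hg0, hg1, smul_smul, hb, hb', ← hBB',
      mem_spanSingleton_mul_iff hd, mul_comm]

theorem exists_lineClass_eq (hV : Module.finrank K V = 2) (C : ClassGroup R) :
    ∃ (v : V) (hv : v ≠ 0), lineClass (K := K) Λ hv = C := by
  have : Nontrivial V := Module.nontrivial_of_finrank_pos (R := K) (by omega)
  obtain ⟨v, hv⟩ := exists_ne (0 : V)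
  obtain ⟨b, B, -, hB0, hb⟩ := exists_basis_forall_mem_iff Λ hV hv
  refine ClassGroup.induction K (fun I => ?_) C
  obtain ⟨p, q, hp, h⟩ := exists_mem_iff_mul_mem_and_mul_mem (coeffIdeal_ne_zero Λ hv) hB0
    I.ne_zero
  have hne : p • b 0 + q • b 1 ≠ 0 := by
    intro h0
    exact hp (by simpa using congrArg (b.coord 0) h0)
  refine ⟨_, hne, congrArg _ (Units.ext ?_)⟩
  ext t
  rw [Units.val_mk0, mem_coeffIdeal Λ, smul_add, smul_smul, smul_smul, hb, h]

theorem lineClass_eq_mk0 (hV : Module.finrank K V = 2) {v : V} (hv : v ≠ 0) {I : Ideal R}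
    (hI : I ≠ 0) (ψ : I →ₗ[R] V)
    (hψ : ∀ x, x ∈ LinearMap.range ψ ↔ x ∈ Λ ∧ ∃ t : K, t • v = x) :
    lineClass (K := K) Λ hv = ClassGroup.mk0 ⟨I, mem_nonZeroDivisors_of_ne_zero hI⟩ := by
  obtain ⟨b, -, hb, -⟩ := exists_basis_forall_mem_iff Λ hV hv
  have hcoord (t : K) : b.coord 0 (t • v) = t := by simp [← hb]
  obtain ⟨c, hc⟩ := I.exists_forall_eq_mul ((b.coord 0).restrictScalars R ∘ₗ ψ)
  have hcI : spanSingleton R⁰ c * (I : FractionalIdeal R⁰ K) = coeffIdeal (K := K) (Λ := Λ) hv := by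
    ext t
    rw [mem_singleton_mul, mem_coeffIdeal Λ]
    constructor
    · rintro ⟨_, hx, rfl⟩
      obtain ⟨x, hxI, rfl⟩ := (mem_coeIdeal _).1 hx
      obtain ⟨hΛ, t, ht⟩ := (hψ _).1 ⟨⟨x, hxI⟩, rfl⟩
      rw [← ht] at hΛ
      rwa [← hc ⟨x, hxI⟩, LinearMap.comp_apply, ← ht, LinearMap.restrictScalars_apply, hcoord]
    · intro ht
      obtain ⟨x, hx⟩ := (hψ _).2 ⟨ht, t, rfl⟩
      refine ⟨algebraMap R K x, (mem_coeIdeal _).2 ⟨x, x.2, rfl⟩, ?_⟩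
      rw [← hc, LinearMap.comp_apply, hx, LinearMap.restrictScalars_apply, hcoord]
  have hc0 : c ≠ 0 := by
    rintro rfl
    exact coeffIdeal_ne_zero Λ hv (by rw [← hcI, spanSingleton_zero, zero_mul])
  rw [← ClassGroup.mk_mk0 K, eq_comm]
  exact ClassGroup.mk_eq_mk_iff_exists_spanSingleton_mul.2 ⟨c, hc0, hcI⟩

end PlaneLattice

section TensorProduct

variable (R K L : Type*) [CommRing R] [IsDedekindDomain R] [Field K] [Algebra R K]
  [IsFractionRing R K] [AddCommGroup L] [Module R L]

instance TensorProduct.isLattice_range_mk_one [Module.Finite R L] :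
    (LinearMap.range (TensorProduct.mk R K L 1)).IsLattice K where
  fg := by
    rw [LinearMap.range_eq_map]
    exact Module.Finite.fg_top.map _
  span_eq_top := by
    rw [LinearMap.coe_range, ← Set.image_univ, ← Submodule.baseChange_span, Submodule.span_univ,
      Submodule.baseChange_top]

theorem TensorProduct.finrank_fractionRing :
    Module.finrank K (K ⊗[R] L) = Module.finrank R L :=
  (TensorProduct.isBaseChange R L K).finrank_eq

end TensorProduct

namespace PlaneLattice

variable {R K L : Type*} [CommRing R] [Field K] [Algebra R K] [AddCommGroup L] [Module R L]

/-- An automorphism of `K ⊗ L` preserving the image of `L` comes from an automorphism of `L`. -/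
theorem exists_baseChange_eq [Module.Finite R L]
    (hinj : Function.Injective (TensorProduct.mk R K L 1))
    (g : K ⊗[R] L →ₗ[K] K ⊗[R] L) (hg : LinearMap.det g = 1)
    (h : ∀ x, g x ∈ LinearMap.range (TensorProduct.mk R K L 1) ↔
      x ∈ LinearMap.range (TensorProduct.mk R K L 1)) :
    ∃ e : L ≃ₗ[R] L, LinearMap.baseChange K (e : L →ₗ[R] L) = g := by
  set ι := TensorProduct.mk R K L 1
  have hdet : LinearMap.det g ≠ 0 := hg ▸ one_ne_zero
  let G : K ⊗[R] L ≃ₗ[R] K ⊗[R] L := (g.equivOfDetNeZero hdet).restrictScalars R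
  have hG (x : K ⊗[R] L) : G x = g x := rfl
  have hmap : Submodule.map (G : K ⊗[R] L →ₗ[R] K ⊗[R] L) (LinearMap.range ι) =
      LinearMap.range ι := by
    ext x
    rw [Submodule.mem_map_equiv, ← h, ← hG, G.apply_symm_apply]
  let i := LinearEquiv.ofInjective ι hinj
  let e : L ≃ₗ[R] L := i ≪≫ₗ G.ofSubmodules _ _ hmap ≪≫ₗ i.symm
  refine ⟨e, TensorProduct.AlgebraTensorModule.curry_injective (LinearMap.ext_ring
    (LinearMap.ext fun y => ?_))⟩
  have : i (e y) = G.ofSubmodules _ _ hmap (i y) := by simp [e]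
  exact congrArg Subtype.val this

theorem exists_eq_span_singleton_of_finrank_eq_one {V : Type*} [AddCommGroup V] [Module K V]
    {ℓ : Submodule K V} (h : Module.finrank K ℓ = 1) :
    ∃ v : V, v ≠ 0 ∧ ℓ = Submodule.span K {v} := by
  obtain ⟨⟨v, hv⟩, hv0, h⟩ := finrank_eq_one_iff'.1 h
  refine ⟨v, fun h0 => hv0 (Subtype.ext h0), le_antisymm (fun x hx => ?_) ?_⟩
  · obtain ⟨c, hc⟩ := h ⟨x, hx⟩
    exact Submodule.mem_span_singleton.2 ⟨c, congrArg Subtype.val hc⟩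
  · rwa [Submodule.span_singleton_le_iff_mem]

variable [IsDedekindDomain R] [IsFractionRing R K]

/-- The map `ℓ ↦ [L ∩ ℓ]` identifies the `SL(L)`-orbits of lines with the ideal class group. -/
theorem exists_lineClass_equiv_orbits [Module.Finite R L] [Module.Projective R L]
    (hrank : Module.finrank R L = 2) :
    ∃ f : {ℓ : Submodule K (K ⊗[R] L) //
            Module.finrank K ℓ = 1} → ClassGroup R,
      Function.Surjective f ∧
      (∀ ℓ ℓ', f ℓ = f ℓ' ↔
        ∃ g : L ≃ₗ[R] L,
          LinearMap.det
            (LinearMap.baseChange K (g : L →ₗ[R] L)) = 1 ∧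
          Submodule.map
            (LinearMap.baseChange K (g : L →ₗ[R] L)) ℓ.1
            = ℓ'.1) ∧
      (∀ ℓ (I : Ideal R) (hI : I ≠ 0),
        Nonempty
          ((Submodule.comap ((TensorProduct.mk R K L) 1)
              (Submodule.restrictScalars R ℓ.1))
            ≃ₗ[R] I) →
        f ℓ = ClassGroup.mk0 ⟨I, mem_nonZeroDivisors_of_ne_zero hI⟩) := by
  let ι : L →ₗ[R] K ⊗[R] L := TensorProduct.mk R K L 1
  let Λ : Submodule R (K ⊗[R] L) := LinearMap.range ι
  have hinj : Function.Injective ι := Module.Flat.tensorProduct_mk_injective R L K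
  have hV : Module.finrank K (K ⊗[R] L) = 2 := by rw [TensorProduct.finrank_fractionRing, hrank]
  choose v hv hℓ using fun ℓ : {ℓ : Submodule K (K ⊗[R] L) // Module.finrank K ℓ = 1} =>
    exists_eq_span_singleton_of_finrank_eq_one ℓ.2
  refine ⟨fun ℓ => lineClass (K := K) Λ (hv ℓ), fun C => ?_,
    fun ℓ ℓ' => ⟨fun h => ?_, ?_⟩, fun ℓ I hI => ?_⟩
  · obtain ⟨w, hw, rfl⟩ := exists_lineClass_eq Λ hV C
    refine ⟨⟨Submodule.span K {w}, finrank_span_singleton hw⟩, ?_⟩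
    set ℓ : {ℓ : Submodule K (K ⊗[R] L) // Module.finrank K ℓ = 1} :=
      ⟨Submodule.span K {w}, finrank_span_singleton hw⟩
    have : v ℓ ∈ Submodule.span K {w} := by
      change v ℓ ∈ ℓ.1
      rw [hℓ ℓ]
      exact Submodule.mem_span_singleton_self _
    obtain ⟨c, hc⟩ := Submodule.mem_span_singleton.1 this
    have hc0 : c ≠ 0 := by
      rintro rfl
      exact hv ℓ (by rw [← hc, zero_smul])
    refine (lineClass_eq_iff Λ _ _).2 ⟨c, hc0,
      coeffIdeal_eq_spanSingleton_mul Λ _ _ hc0 fun t => ?_⟩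
    rw [← hc, smul_smul, mul_comm]
  · obtain ⟨g, c, hdet, hc, hgv, hg⟩ :=
      exists_det_eq_one_of_lineClass_eq Λ hV (hv ℓ) (hv ℓ') h
    obtain ⟨e, rfl⟩ := exists_baseChange_eq hinj g hdet hg
    refine ⟨e, hdet, ?_⟩
    rw [hℓ ℓ, hℓ ℓ', Submodule.map_span, Set.image_singleton, hgv]
    exact Submodule.span_singleton_smul_eq hc.isUnit _
  · rintro ⟨e, -, he⟩
    have hmem : LinearMap.baseChange K (e : L →ₗ[R] L) (v ℓ) ∈ Submodule.span K {v ℓ'} := by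
      rw [← hℓ ℓ', ← he]
      refine Submodule.mem_map_of_mem ?_
      rw [hℓ ℓ]
      exact Submodule.mem_span_singleton_self _
    obtain ⟨c, hc⟩ := Submodule.mem_span_singleton.1 hmem
    have hinj' : Function.Injective (LinearMap.baseChange K (e : L →ₗ[R] L)) :=
      (e.baseChange R K L L).injective
    have hc0 : c ≠ 0 := by
      rintro rfl
      rw [zero_smul] at hc
      exact hv ℓ (hinj' (by rw [← hc, map_zero]))
    refine (lineClass_eq_iff Λ _ _).2 ⟨c, hc0,
      coeffIdeal_eq_spanSingleton_mul Λ _ _ hc0 fun t => ?_⟩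
    rw [mul_comm, ← smul_smul, hc, ← map_smul]
    constructor
    · rintro ⟨y, hy⟩
      exact ⟨e y, by rw [← hy]; simp [ι]⟩
    · rintro ⟨y, hy⟩
      refine ⟨e.symm y, hinj' ?_⟩
      rw [← hy]
      simp [ι]
  · rintro ⟨φ⟩
    refine lineClass_eq_mk0 Λ hV (hv ℓ) hI
      (ι ∘ₗ Submodule.subtype _ ∘ₗ φ.symm.toLinearMap) fun x => ?_
    constructor
    · rintro ⟨i, rfl⟩
      exact ⟨⟨_, rfl⟩, Submodule.mem_span_singleton.1 ((hℓ ℓ).le (φ.symm i).2)⟩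
    · rintro ⟨⟨y, rfl⟩, ht⟩
      have hy : ι y ∈ ℓ.1 := by
        rw [hℓ ℓ]
        exact Submodule.mem_span_singleton.2 ht
      exact ⟨φ ⟨y, hy⟩, by simp⟩

end PlaneLattice

/-- Lemma `ambient-cusps-maximal-order`.
Let `L` be a finitely generated projective `𝓞_K`-module of constant rank two and
let `𝒢 = SL(L)` act on the `K`-lines of `L ⊗ K`.  The map `ℓ ↦ [L ∩ ℓ]` induces a
bijection between the set of `𝒢`-orbits of `K`-lines and the ideal class group:
there is a map `f` from lines to `ClassGroup 𝓞_K` which is surjective, whose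
fibers are exactly the `𝒢`-orbits, and which sends `ℓ` to the class of any
nonzero ideal isomorphic to `L ∩ ℓ`.  In particular the number of orbits equals
the class number `h_K`. -/
theorem statement19 (K : Type*) [Field K] [NumberField K]
    (L : Type*) [AddCommGroup L] [Module (NumberField.RingOfIntegers K) L]
    [Module.Finite (NumberField.RingOfIntegers K) L]
    [Module.Projective (NumberField.RingOfIntegers K) L]
    (hrank : Module.finrank (NumberField.RingOfIntegers K) L = 2) :
    ∃ f : {ℓ : Submodule K (K ⊗[NumberField.RingOfIntegers K] L) //
            Module.finrank K ℓ = 1} → ClassGroup (NumberField.RingOfIntegers K),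
      Function.Surjective f ∧
      (∀ ℓ ℓ', f ℓ = f ℓ' ↔
        ∃ g : L ≃ₗ[NumberField.RingOfIntegers K] L,
          LinearMap.det
            (LinearMap.baseChange K (g : L →ₗ[NumberField.RingOfIntegers K] L)) = 1 ∧
          Submodule.map
            (LinearMap.baseChange K (g : L →ₗ[NumberField.RingOfIntegers K] L)) ℓ.1
            = ℓ'.1) ∧
      (∀ ℓ (I : Ideal (NumberField.RingOfIntegers K)) (hI : I ≠ 0),
        Nonempty
          ((Submodule.comap ((TensorProduct.mk (NumberField.RingOfIntegers K) K L) 1)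
              (Submodule.restrictScalars (NumberField.RingOfIntegers K) ℓ.1))
            ≃ₗ[NumberField.RingOfIntegers K] I) →
        f ℓ = ClassGroup.mk0 ⟨I, mem_nonZeroDivisors_of_ne_zero hI⟩) := by
  exact PlaneLattice.exists_lineClass_equiv_orbits hrank
end
end
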